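/- With A* = Σ_{i=1}^{r} ( δᵢ/(1+δᵢ²) ) ŵᵢ v̂ᵢᵀ as in the optimal rank-r posterior mean approximation, the minimum Bayes risk over rank-at-most-r matrices satisfies E[ ‖A* y − x‖²_{Γ_pos⁻¹} ] = E[ ‖A* y − μ_pos(y)‖²_{Γ_pos⁻¹} ] + E[ ‖μ_pos(y) − x‖²_{Γ_pos⁻¹} ] = Σ_{i>r} δᵢ² + n. -/

import Mathlib

open Matrix MeasureTheory Finset

/-- The density (w.r.t. Lebesgue measure on `ℝⁿ`) of the Gaussian measure `N(μ, Σ)`. -/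
noncomputable def gaussianDensity {n : ℕ} (μ : Fin n → ℝ) (S : Matrix (Fin n) (Fin n) ℝ)
    (x : Fin n → ℝ) : ℝ :=
  (2 * Real.pi) ^ (-(n : ℝ) / 2) * S.det ^ (-(1:ℝ) / 2) *
    Real.exp (-(1 / 2) * ((x - μ) ⬝ᵥ (S⁻¹ *ᵥ (x - μ))))

/-- The Gaussian probability measure `N(μ, Σ)` on `ℝⁿ`. -/
noncomputable def gaussianMeasure {n : ℕ} (μ : Fin n → ℝ)
    (S : Matrix (Fin n) (Fin n) ℝ) : Measure (Fin n → ℝ) :=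
  MeasureTheory.volume.withDensity fun x => ENNReal.ofReal (gaussianDensity μ S x)

/-- The joint law of `(x, y)` where `x ~ N(0, Γpr)`, `ε ~ N(0, Γobs)` independent of `x`,
and `y = G x + ε`. -/
noncomputable def jointMeasure {n m : ℕ} (G : Matrix (Fin m) (Fin n) ℝ)
    (Γpr : Matrix (Fin n) (Fin n) ℝ) (Γobs : Matrix (Fin m) (Fin m) ℝ) :
    Measure ((Fin n → ℝ) × (Fin m → ℝ)) :=
  Measure.map (fun p : (Fin n → ℝ) × (Fin m → ℝ) => (p.1, G *ᵥ p.1 + p.2))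
    ((gaussianMeasure 0 Γpr).prod (gaussianMeasure 0 Γobs))

/-- The Bayes risk `E[ ‖A y − x‖²_S ]` of the linear estimator `y ↦ A y`. -/
noncomputable def bayesRisk {n m : ℕ} (P : Measure ((Fin n → ℝ) × (Fin m → ℝ)))
    (S : Matrix (Fin n) (Fin n) ℝ) (A : Matrix (Fin n) (Fin m) ℝ) : ℝ :=
  ∫ p, (A *ᵥ p.2 - p.1) ⬝ᵥ (S *ᵥ (A *ᵥ p.2 - p.1)) ∂P

/-! Only the second moments of `(x, y)` matter. Let `N` be the posterior precision, `K` the matrix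
of the posterior mean and `Γy = G Γpr Gᵀ + Γobs` the covariance of the data. Since `K Γy = Γpr Gᵀ`,
completing the square in the second moment matrix of the error `B y - x` gives
`(B - K) Γy (B - K)ᵀ + N⁻¹`, so that in the `N`-norm the estimator `B` has risk
`tr (N (B - K) Γy (B - K)ᵀ) + n`, whose first term is `E‖B y - K y‖²`.

The factors `Spr` and `Sobs` turn `N` and `Γy` into `1 + Fᵀ F` and `1 + F Fᵀ` with
`F = Sobs⁻¹ G Spr`, which the singular value decomposition of `F` diagonalises simultaneously: `K`
has the coefficients `δᵢ / (1 + δᵢ²)`, and dropping the `i`-th of them costs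
`((1 + δᵢ²) · δᵢ / (1 + δᵢ²))² = δᵢ²`. -/

section SecondMoment

open ProbabilityTheory

variable {Ω Ω' ι κ : Type*} [MeasurableSpace Ω] [MeasurableSpace Ω']
  {P : Measure Ω} {Q : Measure Ω'} {C : Matrix ι ι ℝ}

/-- The random vector `X` is square integrable under `P` with (uncentred) second moment matrix
`E[X Xᵀ] = C`; for a centred vector, `C` is its covariance matrix. -/
structure HasSecondMoment (X : Ω → ι → ℝ) (C : Matrix ι ι ℝ) (P : Measure Ω) : Prop where
  memLp : ∀ i, MemLp (fun ω => X ω i) 2 P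
  integral_mul : ∀ i j, ∫ ω, X ω i * X ω j ∂P = C i j

namespace HasSecondMoment

lemma integrable_mul {X : Ω → ι → ℝ} (hX : HasSecondMoment X C P) (i j : ι) :
    Integrable (fun ω => X ω i * X ω j) P :=
  (hX.memLp i).integrable_mul (hX.memLp j)

lemma comp_measurePreserving {X : Ω → ι → ℝ} (hX : HasSecondMoment X C P) {T : Ω' → Ω}
    (hT : MeasurePreserving T Q P) : HasSecondMoment (fun ω => X (T ω)) C Q where
  memLp i := (hX.memLp i).comp_measurePreserving hT
  integral_mul i j := by
    rw [← hX.integral_mul i j, ← hT.map_eq, integral_map hT.aemeasurable]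
    rw [hT.map_eq]
    exact (hX.integrable_mul i j).aestronglyMeasurable

lemma map {X : Ω → ι → ℝ} (hX : Measurable X) {T : Ω' → Ω} (hT : Measurable T)
    (hXT : HasSecondMoment (fun ω => X (T ω)) C Q) : HasSecondMoment X C (Q.map T) where
  memLp i := (memLp_map_measure_iff (by fun_prop) hT.aemeasurable).2 (hXT.memLp i)
  integral_mul i j := by
    rw [← hXT.integral_mul i j, integral_map hT.aemeasurable (by fun_prop)]

lemma mulVec [Fintype ι] {X : Ω → ι → ℝ} (hX : HasSecondMoment X C P) (M : Matrix κ ι ℝ) :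
    HasSecondMoment (fun ω => M *ᵥ X ω) (M * C * Mᵀ) P where
  memLp k := memLp_finsetSum _ fun i _ => (hX.memLp i).const_mul (M k i)
  integral_mul k l := by
    have hint (i j : ι) : Integrable (fun ω => M k i * M l j * (X ω i * X ω j)) P :=
      (hX.integrable_mul i j).const_mul _
    calc ∫ ω, (M *ᵥ X ω) k * (M *ᵥ X ω) l ∂P
        = ∫ ω, ∑ i, ∑ j, M k i * M l j * (X ω i * X ω j) ∂P := by
          simp only [Matrix.mulVec, dotProduct, Finset.sum_mul_sum, mul_mul_mul_comm (M k _)]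
      _ = ∑ i, ∑ j, M k i * C i j * M l j := by
          rw [integral_finsetSum _ fun i _ => integrable_finsetSum _ fun j _ => hint i j]
          refine Finset.sum_congr rfl fun i _ => ?_
          rw [integral_finsetSum _ fun j _ => hint i j]
          refine Finset.sum_congr rfl fun j _ => ?_
          rw [integral_const_mul, hX.integral_mul, mul_right_comm]
      _ = (M * C * Mᵀ) k l := by
          simp only [Matrix.mul_apply, transpose_apply, Finset.sum_mul]
          exact Finset.sum_comm

lemma integral_dotProduct_mulVec [Fintype ι] {X : Ω → ι → ℝ} (hX : HasSecondMoment X C P)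
    (S : Matrix ι ι ℝ) : ∫ ω, X ω ⬝ᵥ (S *ᵥ X ω) ∂P = (S * C).trace := by
  have hint (i j : ι) : Integrable (fun ω => S i j * (X ω j * X ω i)) P :=
    (hX.integrable_mul j i).const_mul (S i j)
  calc ∫ ω, X ω ⬝ᵥ (S *ᵥ X ω) ∂P
      = ∫ ω, ∑ i, ∑ j, S i j * (X ω j * X ω i) ∂P := by
        simp only [Matrix.mulVec, dotProduct, Finset.mul_sum, mul_comm, mul_left_comm]
    _ = ∑ i, ∑ j, S i j * C j i := by
        rw [integral_finsetSum _ fun i _ => integrable_finsetSum _ fun j _ => hint i j]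
        refine Finset.sum_congr rfl fun i _ => ?_
        rw [integral_finsetSum _ fun j _ => hint i j]
        simp_rw [integral_const_mul, hX.integral_mul]
    _ = (S * C).trace := rfl

end HasSecondMoment

lemma hasSecondMoment_pi [Fintype ι] [DecidableEq ι] {μ : ι → Measure ℝ}
    [∀ i, IsProbabilityMeasure (μ i)] (hμ : ∀ i, MemLp id 2 (μ i))
    (hmean : ∀ i, ∫ x, x ∂μ i = 0) :
    HasSecondMoment id (diagonal fun i => Var[id; μ i]) (Measure.pi μ) where
  memLp i := (hμ i).comp_measurePreserving (measurePreserving_eval μ i)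
  integral_mul i j := by
    obtain rfl | hij := eq_or_ne i j
    · rw [diagonal_apply_eq, variance_of_integral_eq_zero aemeasurable_id (hmean i),
        ← integral_comp_eval (i := i) (by fun_prop)]
      simp [sq]
    · have hindep :=
        (iIndepFun_pi (μ := μ) (X := fun _ => id) fun _ => aemeasurable_id).indepFun hij
      have hprod := hindep.integral_fun_mul_eq_mul_integral
        (measurable_pi_apply i).aestronglyMeasurable (measurable_pi_apply j).aestronglyMeasurable
      simp only [id] at hprod ⊢
      rw [hprod, integral_eval, hmean, zero_mul, diagonal_apply_ne _ hij]

/-- Under `P`, the parameter `x` and the noise `y - G x` are square integrable and uncorrelated,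
with second moment matrices `Γpr` and `Γobs`. -/
def HasLinearModelMoments {m n : Type*} [Fintype n] (G : Matrix m n ℝ) (Γobs : Matrix m m ℝ)
    (Γpr : Matrix n n ℝ) (P : Measure ((n → ℝ) × (m → ℝ))) : Prop :=
  HasSecondMoment (fun p => Sum.elim p.1 (p.2 - G *ᵥ p.1)) (fromBlocks Γpr 0 0 Γobs) P

end SecondMoment

section Gaussian

open ProbabilityTheory

lemma pi_withDensity_ofReal {ι : Type*} [Fintype ι] {α : ι → Type*}
    [∀ i, MeasurableSpace (α i)] (μ : ∀ i, Measure (α i)) [∀ i, SigmaFinite (μ i)]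
    {f : ∀ i, α i → ℝ} (hf : ∀ i, Integrable (f i) (μ i)) (hf0 : ∀ i x, 0 ≤ f i x) :
    Measure.pi (fun i => (μ i).withDensity fun x => ENNReal.ofReal (f i x)) =
      (Measure.pi μ).withDensity fun x => ENNReal.ofReal (∏ i, f i (x i)) := by
  have (i : ι) : SigmaFinite ((μ i).withDensity fun x => ENNReal.ofReal (f i x)) :=
    SigmaFinite.withDensity_ofReal _
  refine Measure.pi_eq fun s hs => ?_
  have hprod := integral_fintype_prod_eq_prod (μ := fun i => (μ i).restrict (s i)) f
  rw [withDensity_apply _ (MeasurableSet.univ_pi hs), Measure.restrict_pi_pi,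
    ← ofReal_integral_eq_lintegral_ofReal
      (Integrable.fintype_prod_dep fun i => (hf i).restrict)
      (.of_forall fun x => Finset.prod_nonneg fun i _ => hf0 i (x i)),
    hprod, ENNReal.ofReal_prod_of_nonneg fun i _ => integral_nonneg (hf0 i)]
  refine Finset.prod_congr rfl fun i _ => ?_
  rw [withDensity_apply _ (hs i), ofReal_integral_eq_lintegral_ofReal (hf i).restrict
    (.of_forall (hf0 i))]

lemma map_withDensity_comp {α β : Type*} [MeasurableSpace α] [MeasurableSpace β]
    {μ : Measure α} {T : α → β} (hT : Measurable T) {f : β → ENNReal} (hf : Measurable f) :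
    (μ.withDensity fun x => f (T x)).map T = (μ.map T).withDensity f := by
  ext s hs
  rw [Measure.map_apply hT hs, withDensity_apply _ (hT hs), withDensity_apply _ hs,
    setLIntegral_map hs hf hT]

variable {n : ℕ}

lemma measurable_mulVec {m n : Type*} [Countable m] [Fintype n] (L : Matrix m n ℝ) :
    Measurable fun x : n → ℝ => L *ᵥ x :=
  (continuous_const.matrix_mulVec continuous_id).measurable

lemma measurable_gaussianDensity (μ : Fin n → ℝ) (S : Matrix (Fin n) (Fin n) ℝ) :
    Measurable (gaussianDensity μ S) := by
  have hdiff : Continuous fun x : Fin n → ℝ => x - μ := by fun_prop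
  have hquad := hdiff.dotProduct ((continuous_const (y := S⁻¹)).matrix_mulVec hdiff)
  exact ((Real.continuous_exp.comp (hquad.const_mul _)).const_mul _).measurable

lemma gaussianDensity_zero_one (x : Fin n → ℝ) :
    gaussianDensity 0 1 x = ∏ i, gaussianPDFReal 0 1 (x i) := by
  have hconst : (2 * Real.pi) ^ (-(n : ℝ) / 2) = (√(2 * Real.pi))⁻¹ ^ n := by
    rw [Real.sqrt_eq_rpow, ← Real.rpow_neg (by positivity), ← Real.rpow_mul_natCast (by positivity)]
    congr 1
    ring
  have hexp : -(1 / 2) * (x ⬝ᵥ x) = ∑ i, -(x i) ^ 2 / 2 := by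
    rw [dotProduct, Finset.mul_sum]
    exact Finset.sum_congr rfl fun i _ => by ring
  simp only [gaussianDensity, gaussianPDFReal_def, sub_zero, inv_one, one_mulVec, det_one,
    Real.one_rpow, mul_one, NNReal.coe_one, Finset.prod_mul_distrib, Finset.prod_const,
    Finset.card_univ, Fintype.card_fin, hconst, hexp, Real.exp_sum]

lemma gaussianMeasure_zero_one :
    gaussianMeasure 0 (1 : Matrix (Fin n) (Fin n) ℝ) = Measure.pi fun _ => gaussianReal 0 1 := by
  simp_rw [gaussianReal_of_var_ne_zero 0 one_ne_zero, gaussianMeasure, gaussianDensity_zero_one]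
  exact (pi_withDensity_ofReal _ (fun _ => integrable_gaussianPDFReal 0 1)
    fun _ => gaussianPDFReal_nonneg 0 1).symm

lemma abs_det_mul_gaussianDensity {L S : Matrix (Fin n) (Fin n) ℝ} (hL : IsUnit L.det)
    (hS : 0 ≤ S.det) (μ x : Fin n → ℝ) :
    |L.det| * gaussianDensity (L *ᵥ μ) (L * S * Lᵀ) (L *ᵥ x) = gaussianDensity μ S x := by
  have hquad : (L *ᵥ (x - μ)) ⬝ᵥ ((L * S * Lᵀ)⁻¹ *ᵥ (L *ᵥ (x - μ))) =
      (x - μ) ⬝ᵥ (S⁻¹ *ᵥ (x - μ)) := by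
    have hinv : Lᵀ * ((L * S * Lᵀ)⁻¹ * L) = S⁻¹ := by
      rw [Matrix.mul_inv_rev, Matrix.mul_inv_rev, Matrix.mul_assoc,
        nonsing_inv_mul_cancel_right _ _ hL,
        mul_nonsing_inv_cancel_left _ _ (isUnit_det_transpose L hL)]
    rw [mulVec_mulVec, ← vecMul_transpose L, ← dotProduct_mulVec, mulVec_mulVec, hinv]
  have hdet : (L * S * Lᵀ).det ^ (-(1 : ℝ) / 2) = |L.det|⁻¹ * S.det ^ (-(1 : ℝ) / 2) := by
    rw [det_mul, det_mul, det_transpose, mul_right_comm, ← sq, ← sq_abs,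
      Real.mul_rpow (sq_nonneg _) hS, ← Real.rpow_natCast_mul (abs_nonneg _)]
    norm_num [Real.rpow_neg_one]
  have habs : |L.det| ≠ 0 := abs_ne_zero.mpr hL.ne_zero
  rw [gaussianDensity, gaussianDensity, ← mulVec_sub, hquad, hdet]
  field_simp

lemma map_mulVec_gaussianMeasure {L S : Matrix (Fin n) (Fin n) ℝ} (hL : IsUnit L.det)
    (hS : 0 ≤ S.det) (μ : Fin n → ℝ) :
    (gaussianMeasure μ S).map (fun x => L *ᵥ x) = gaussianMeasure (L *ᵥ μ) (L * S * Lᵀ) := by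
  set f := fun x => ENNReal.ofReal (gaussianDensity (L *ᵥ μ) (L * S * Lᵀ) x)
  have hf : Measurable f := (measurable_gaussianDensity _ _).ennreal_ofReal
  have hvol : (volume : Measure (Fin n → ℝ)).map (fun x => L *ᵥ x) =
      ENNReal.ofReal |L.det⁻¹| • volume :=
    Real.map_matrix_volume_pi_eq_smul_volume_pi hL.ne_zero
  have hscale : ENNReal.ofReal |L.det| * ENNReal.ofReal |L.det⁻¹| = 1 := by
    rw [← ENNReal.ofReal_mul (abs_nonneg _), ← abs_mul, mul_inv_cancel₀ hL.ne_zero, abs_one,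
      ENNReal.ofReal_one]
  calc (gaussianMeasure μ S).map (fun x => L *ᵥ x)
      = (volume.withDensity fun x => (ENNReal.ofReal |L.det| • f) (L *ᵥ x)).map
          (fun x => L *ᵥ x) := by
        simp_rw [gaussianMeasure, ← abs_det_mul_gaussianDensity hL hS μ,
          ENNReal.ofReal_mul (abs_nonneg _)]
        rfl
    _ = gaussianMeasure (L *ᵥ μ) (L * S * Lᵀ) := by
        rw [map_withDensity_comp (measurable_mulVec L) (hf.const_smul _), hvol,
          withDensity_smul_measure, withDensity_smul _ hf, smul_smul, mul_comm, hscale, one_smul,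
          gaussianMeasure]

lemma gaussianMeasure_zero_mul_transpose {L : Matrix (Fin n) (Fin n) ℝ} (hL : IsUnit L.det) :
    gaussianMeasure 0 (L * Lᵀ) = (Measure.pi fun _ => gaussianReal 0 1).map (fun x => L *ᵥ x) := by
  rw [← gaussianMeasure_zero_one, map_mulVec_gaussianMeasure hL (by simp)]
  simp

lemma hasSecondMoment_pi_gaussianReal (ι : Type*) [Fintype ι] [DecidableEq ι] :
    HasSecondMoment id (1 : Matrix ι ι ℝ) (Measure.pi fun _ => gaussianReal 0 1) := by
  simpa using hasSecondMoment_pi (μ := fun _ : ι => gaussianReal 0 1)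
    (fun _ => memLp_id_gaussianReal 2) fun _ => integral_id_gaussianReal

lemma hasSecondMoment_gaussianMeasure_prod {m : ℕ} {L : Matrix (Fin n) (Fin n) ℝ}
    {K : Matrix (Fin m) (Fin m) ℝ} (hL : IsUnit L.det) (hK : IsUnit K.det) :
    HasSecondMoment (fun p => Sum.elim p.1 p.2) (fromBlocks (L * Lᵀ) 0 0 (K * Kᵀ))
      ((gaussianMeasure 0 (L * Lᵀ)).prod (gaussianMeasure 0 (K * Kᵀ))) := by
  have hstd := (hasSecondMoment_pi_gaussianReal (Fin n ⊕ Fin m)).comp_measurePreserving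
    (measurePreserving_sumPiEquivProdPi_symm fun _ => gaussianReal 0 1)
  rw [gaussianMeasure_zero_mul_transpose hL, gaussianMeasure_zero_mul_transpose hK,
    Measure.map_prod_map _ _ (measurable_mulVec L) (measurable_mulVec K)]
  refine HasSecondMoment.map ?_ ((measurable_mulVec L).prodMap (measurable_mulVec K)) ?_
  · exact (MeasurableEquiv.sumPiEquivProdPi fun _ => ℝ).symm.measurable
  · convert hstd.mulVec (fromBlocks L 0 0 K) using 1
    · ext p i
      cases i <;> simp [fromBlocks_mulVec] <;> rfl
    · simp [fromBlocks_transpose, fromBlocks_multiply]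

lemma hasLinearModelMoments_jointMeasure {m : ℕ} (G : Matrix (Fin m) (Fin n) ℝ)
    {L : Matrix (Fin n) (Fin n) ℝ} {K : Matrix (Fin m) (Fin m) ℝ}
    (hL : IsUnit L.det) (hK : IsUnit K.det) :
    HasLinearModelMoments G (K * Kᵀ) (L * Lᵀ) (jointMeasure G (L * Lᵀ) (K * Kᵀ)) := by
  have hG : Measurable fun p : (Fin n → ℝ) × (Fin m → ℝ) => G *ᵥ p.1 :=
    (measurable_mulVec G).comp measurable_fst
  refine HasSecondMoment.map ?_ (measurable_fst.prodMk (hG.add measurable_snd)) ?_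
  · exact (MeasurableEquiv.sumPiEquivProdPi fun _ => ℝ).symm.measurable.comp
      (measurable_fst.prodMk (measurable_snd.sub hG))
  · simpa using hasSecondMoment_gaussianMeasure_prod hL hK

end Gaussian

section RankOneSum

variable {R ι l m n : Type*} [Fintype ι]

/-- The matrix `∑ᵢ aᵢ vᵢ wᵢᵀ`; for orthonormal `v` and `w`, a singular value decomposition
in which the `aᵢ` may have any sign and order. -/
def rankOneSum [NonUnitalNonAssocSemiring R] (v : ι → m → R) (w : ι → n → R) (a : ι → R) :
    Matrix m n R :=
  ∑ i, a i • vecMulVec (v i) (w i)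

section CommRing

variable [CommRing R] (u : ι → l → R) (v : ι → m → R) (w : ι → n → R) (a b : ι → R)

lemma transpose_rankOneSum : (rankOneSum v w a)ᵀ = rankOneSum w v a := by
  simp [rankOneSum, transpose_sum, transpose_vecMulVec]

lemma rankOneSum_add : rankOneSum v w (a + b) = rankOneSum v w a + rankOneSum v w b := by
  simp [rankOneSum, add_smul, Finset.sum_add_distrib]

lemma rankOneSum_sub : rankOneSum v w (a - b) = rankOneSum v w a - rankOneSum v w b := by
  simp [rankOneSum, sub_smul, Finset.sum_sub_distrib]

lemma mul_rankOneSum_mul {l' : Type*} [Fintype m] [Fintype n] (A : Matrix l m R)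
    (B : Matrix n l' R) :
    A * rankOneSum v w a * B = rankOneSum (fun i => A *ᵥ v i) (fun i => Bᵀ *ᵥ w i) a := by
  simp [rankOneSum, Matrix.mul_sum, Matrix.sum_mul, mul_vecMulVec, vecMulVec_mul, mulVec_transpose]

variable {v} [DecidableEq ι]

lemma rankOneSum_mul_rankOneSum [Fintype m]
    (hv : ∀ i j, v i ⬝ᵥ v j = if i = j then 1 else 0) :
    rankOneSum u v a * rankOneSum v w b = rankOneSum u w (a * b) := by
  have hterm (i j : ι) : vecMulVec (u i) (v i) * vecMulVec (v j) (w j) =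
      if i = j then vecMulVec (u i) (w j) else 0 := by
    rw [vecMulVec_mul_vecMulVec, vecMulVec_smul, hv, ite_smul, one_smul, zero_smul]
  simp [rankOneSum, Matrix.sum_mul, Matrix.mul_sum, hterm, smul_smul, mul_comm]

lemma rankOneSum_ite_mem (s : Finset ι) (v : ι → m → R) :
    rankOneSum v w (fun i => if i ∈ s then a i else 0) = ∑ i ∈ s, a i • vecMulVec (v i) (w i) := by
  simp [rankOneSum, ite_smul]

lemma trace_rankOneSum [Fintype m] (hv : ∀ i j, v i ⬝ᵥ v j = if i = j then 1 else 0) :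
    (rankOneSum v v a).trace = ∑ i, a i := by
  simp [rankOneSum, trace_sum, trace_vecMulVec, hv]

variable [Fintype m] [DecidableEq m]

lemma one_add_rankOneSum_mul_rankOneSum (hv : ∀ i j, v i ⬝ᵥ v j = if i = j then 1 else 0) :
    (1 + rankOneSum v v a) * rankOneSum v w b = rankOneSum v w ((1 + a) * b) := by
  rw [Matrix.add_mul, Matrix.one_mul, rankOneSum_mul_rankOneSum _ _ _ _ hv, ← rankOneSum_add,
    add_mul, one_mul]

variable {w} [Fintype n] [DecidableEq n]

lemma trace_one_add_gram_mul_rankOneSum (hv : ∀ i j, v i ⬝ᵥ v j = if i = j then 1 else 0)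
    (hw : ∀ i j, w i ⬝ᵥ w j = if i = j then 1 else 0) :
    ((1 + (rankOneSum v w a)ᵀ * rankOneSum v w a) * rankOneSum w v b *
      (1 + rankOneSum v w a * (rankOneSum v w a)ᵀ) * (rankOneSum w v b)ᵀ).trace =
      ∑ i, ((1 + a i ^ 2) * b i) ^ 2 := by
  simp only [transpose_rankOneSum]
  rw [rankOneSum_mul_rankOneSum _ _ _ _ hv, rankOneSum_mul_rankOneSum _ _ _ _ hw,
    one_add_rankOneSum_mul_rankOneSum _ _ _ hw, Matrix.mul_assoc,
    one_add_rankOneSum_mul_rankOneSum _ _ _ hv, rankOneSum_mul_rankOneSum _ _ _ _ hv,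
    trace_rankOneSum _ hw]
  simp [sq]

end CommRing

lemma one_add_gram_mul_rankOneSum_div {K : Type*} [Field K] [LinearOrder K]
    [IsStrictOrderedRing K] [DecidableEq ι] [Fintype m] [Fintype n] [DecidableEq n]
    {v : ι → m → K} {w : ι → n → K}
    (hv : ∀ i j, v i ⬝ᵥ v j = if i = j then 1 else 0)
    (hw : ∀ i j, w i ⬝ᵥ w j = if i = j then 1 else 0) (δ : ι → K) :
    (1 + (rankOneSum v w δ)ᵀ * rankOneSum v w δ) *
      rankOneSum w v (fun i => δ i / (1 + δ i ^ 2)) = (rankOneSum v w δ)ᵀ := by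
  rw [transpose_rankOneSum, rankOneSum_mul_rankOneSum _ _ _ _ hv,
    one_add_rankOneSum_mul_rankOneSum _ _ _ hw]
  congr 1
  ext i
  have : 1 + δ i ^ 2 ≠ 0 := by positivity
  simp only [Pi.mul_apply, Pi.add_apply, Pi.one_apply, Pi.pow_apply, ← sq]
  field_simp

end RankOneSum

section LinearGaussianModel

variable {R m n : Type*} [CommRing R] [Fintype m] [Fintype n]

/-- The covariance of the data `y = G x + ε`. -/
def dataCovariance (G : Matrix m n R) (Γobs : Matrix m m R) (Γpr : Matrix n n R) :
    Matrix m m R :=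
  G * Γpr * Gᵀ + Γobs

variable [DecidableEq m]

lemma inv_mul_dataCovariance_mul {G : Matrix m n R} {Spr : Matrix n n R} {Sobs : Matrix m m R}
    (hSobs : IsUnit Sobs.det) :
    Sobs⁻¹ * dataCovariance G (Sobs * Sobsᵀ) (Spr * Sprᵀ) * (Sobs⁻¹)ᵀ =
      1 + (Sobs⁻¹ * G * Spr) * (Sobs⁻¹ * G * Spr)ᵀ := by
  have hnoise : Sobs⁻¹ * (Sobs * Sobsᵀ) * (Sobs⁻¹)ᵀ = 1 := by
    rw [nonsing_inv_mul_cancel_left _ _ hSobs, ← transpose_mul, nonsing_inv_mul _ hSobs,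
      transpose_one]
  rw [dataCovariance, Matrix.mul_add, Matrix.add_mul, hnoise, add_comm]
  simp only [transpose_mul, Matrix.mul_assoc]

variable [DecidableEq n]

/-- The inverse posterior covariance `Gᵀ Γobs⁻¹ G + Γpr⁻¹`. -/
noncomputable def posteriorPrecision (G : Matrix m n R) (Γobs : Matrix m m R)
    (Γpr : Matrix n n R) : Matrix n n R :=
  Gᵀ * Γobs⁻¹ * G + Γpr⁻¹

/-- The matrix `K` of the posterior mean `y ↦ K y`. -/
noncomputable def posteriorGain (G : Matrix m n R) (Γobs : Matrix m m R)
    (Γpr : Matrix n n R) : Matrix n m R :=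
  (posteriorPrecision G Γobs Γpr)⁻¹ * Gᵀ * Γobs⁻¹

variable {G : Matrix m n R} {Γobs : Matrix m m R} {Γpr : Matrix n n R}

lemma posteriorPrecision_mul_prior (hpr : IsUnit Γpr.det) :
    posteriorPrecision G Γobs Γpr * Γpr = Gᵀ * Γobs⁻¹ * G * Γpr + 1 := by
  rw [posteriorPrecision, Matrix.add_mul, nonsing_inv_mul _ hpr]

lemma posteriorGain_mul_dataCovariance (hobs : IsUnit Γobs.det) (hpr : IsUnit Γpr.det)
    (hpos : IsUnit (posteriorPrecision G Γobs Γpr).det) :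
    posteriorGain G Γobs Γpr * dataCovariance G Γobs Γpr = Γpr * Gᵀ := by
  have hN : Gᵀ * Γobs⁻¹ * dataCovariance G Γobs Γpr =
      posteriorPrecision G Γobs Γpr * (Γpr * Gᵀ) := by
    rw [← Matrix.mul_assoc, posteriorPrecision_mul_prior hpr, dataCovariance, Matrix.mul_add,
      nonsing_inv_mul_cancel_right _ _ hobs, Matrix.add_mul, Matrix.one_mul]
    simp only [Matrix.mul_assoc]
  rw [posteriorGain, Matrix.mul_assoc _ Gᵀ, Matrix.mul_assoc, hN,
    nonsing_inv_mul_cancel_left _ _ hpos]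

lemma posteriorGain_mul_add_inv_posteriorPrecision (hpr : IsUnit Γpr.det)
    (hpos : IsUnit (posteriorPrecision G Γobs Γpr).det) :
    posteriorGain G Γobs Γpr * (G * Γpr) + (posteriorPrecision G Γobs Γpr)⁻¹ = Γpr := by
  calc posteriorGain G Γobs Γpr * (G * Γpr) + (posteriorPrecision G Γobs Γpr)⁻¹
      = (posteriorPrecision G Γobs Γpr)⁻¹ * (posteriorPrecision G Γobs Γpr * Γpr) := by
        rw [posteriorPrecision_mul_prior hpr, posteriorGain, Matrix.mul_add, Matrix.mul_one]
        simp only [Matrix.mul_assoc]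
    _ = Γpr := nonsing_inv_mul_cancel_left _ _ hpos

lemma error_secondMoment_eq (hobs : IsUnit Γobs.det) (hpr : IsUnit Γpr.det)
    (hpos : IsUnit (posteriorPrecision G Γobs Γpr).det) (hobs' : Γobs.IsSymm) (hpr' : Γpr.IsSymm)
    (B : Matrix n m R) :
    (B * G - 1) * Γpr * (B * G - 1)ᵀ + B * Γobs * Bᵀ =
      (B - posteriorGain G Γobs Γpr) * dataCovariance G Γobs Γpr *
        (B - posteriorGain G Γobs Γpr)ᵀ + (posteriorPrecision G Γobs Γpr)⁻¹ := by
  set K := posteriorGain G Γobs Γpr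
  have hgain : K * dataCovariance G Γobs Γpr = Γpr * Gᵀ :=
    posteriorGain_mul_dataCovariance hobs hpr hpos
  have hgain_transpose : dataCovariance G Γobs Γpr * Kᵀ = G * Γpr := by
    have h := congrArg transpose hgain
    simpa [dataCovariance, transpose_mul, hobs'.eq, hpr'.eq, Matrix.mul_assoc] using h
  have hcov : K * (G * Γpr) + (posteriorPrecision G Γobs Γpr)⁻¹ = Γpr :=
    posteriorGain_mul_add_inv_posteriorPrecision hpr hpos
  have hsquare : (B - K) * dataCovariance G Γobs Γpr * (B - K)ᵀ =
      B * dataCovariance G Γobs Γpr * Bᵀ - Γpr * Gᵀ * Bᵀ - B * (G * Γpr) + K * (G * Γpr) := by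
    rw [Matrix.sub_mul, hgain, transpose_sub, Matrix.mul_sub, Matrix.sub_mul, Matrix.sub_mul,
      Matrix.mul_assoc B _ Kᵀ, hgain_transpose, ← hgain, Matrix.mul_assoc K _ Kᵀ, hgain_transpose]
    abel
  calc (B * G - 1) * Γpr * (B * G - 1)ᵀ + B * Γobs * Bᵀ
      = B * dataCovariance G Γobs Γpr * Bᵀ - Γpr * Gᵀ * Bᵀ - B * (G * Γpr) + Γpr := by
        simp only [dataCovariance, transpose_sub, transpose_mul, transpose_one, Matrix.mul_add,
          Matrix.add_mul, Matrix.mul_sub, Matrix.sub_mul, Matrix.mul_one, Matrix.one_mul,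
          Matrix.mul_assoc]
        abel
    _ = (B - K) * dataCovariance G Γobs Γpr * (B - K)ᵀ + (posteriorPrecision G Γobs Γpr)⁻¹ := by
        rw [hsquare, add_assoc, hcov]

section Whitening

variable {Spr : Matrix n n R} (Sobs : Matrix m m R)

lemma transpose_mul_posteriorPrecision_mul (hSpr : IsUnit Spr.det) :
    Sprᵀ * posteriorPrecision G (Sobs * Sobsᵀ) (Spr * Sprᵀ) * Spr =
      1 + (Sobs⁻¹ * G * Spr)ᵀ * (Sobs⁻¹ * G * Spr) := by
  have hprior : Sprᵀ * (Spr * Sprᵀ)⁻¹ * Spr = 1 := by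
    rw [Matrix.mul_inv_rev, mul_nonsing_inv_cancel_left _ _ (isUnit_det_transpose Spr hSpr),
      nonsing_inv_mul _ hSpr]
  rw [posteriorPrecision, Matrix.mul_add, Matrix.add_mul, hprior, add_comm, Matrix.mul_inv_rev,
    ← transpose_nonsing_inv]
  simp only [transpose_mul, Matrix.mul_assoc]

variable {Sobs}

lemma posteriorGain_eq_of_one_add_gram_mul_eq (hSpr : IsUnit Spr.det)
    (hpos : IsUnit (posteriorPrecision G (Sobs * Sobsᵀ) (Spr * Sprᵀ)).det) {X : Matrix n m R}
    (hX : (1 + (Sobs⁻¹ * G * Spr)ᵀ * (Sobs⁻¹ * G * Spr)) * X = (Sobs⁻¹ * G * Spr)ᵀ) :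
    posteriorGain G (Sobs * Sobsᵀ) (Spr * Sprᵀ) = Spr * X * Sobs⁻¹ := by
  have hmul : Sprᵀ * (posteriorPrecision G (Sobs * Sobsᵀ) (Spr * Sprᵀ) * (Spr * X * Sobs⁻¹)) =
      Sprᵀ * (Gᵀ * (Sobs * Sobsᵀ)⁻¹) := by
    calc Sprᵀ * (posteriorPrecision G (Sobs * Sobsᵀ) (Spr * Sprᵀ) * (Spr * X * Sobs⁻¹))
        = Sprᵀ * posteriorPrecision G (Sobs * Sobsᵀ) (Spr * Sprᵀ) * Spr * X * Sobs⁻¹ := by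
          simp only [Matrix.mul_assoc]
      _ = (Sobs⁻¹ * G * Spr)ᵀ * Sobs⁻¹ := by
          rw [transpose_mul_posteriorPrecision_mul Sobs hSpr, hX]
      _ = Sprᵀ * (Gᵀ * (Sobs * Sobsᵀ)⁻¹) := by
          rw [Matrix.mul_inv_rev, ← transpose_nonsing_inv]
          simp only [transpose_mul, Matrix.mul_assoc]
  have hcancel := mul_right_injective_of_inv _ _
    (nonsing_inv_mul _ (isUnit_det_transpose Spr hSpr)) hmul
  rw [posteriorGain, Matrix.mul_assoc, ← hcancel, nonsing_inv_mul_cancel_left _ _ hpos]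

lemma trace_posteriorPrecision_mul_dataCovariance (hSpr : IsUnit Spr.det)
    (hSobs : IsUnit Sobs.det) (X : Matrix n m R) :
    (posteriorPrecision G (Sobs * Sobsᵀ) (Spr * Sprᵀ) * (Spr * X * Sobs⁻¹ *
      dataCovariance G (Sobs * Sobsᵀ) (Spr * Sprᵀ) * (Spr * X * Sobs⁻¹)ᵀ)).trace =
      ((1 + (Sobs⁻¹ * G * Spr)ᵀ * (Sobs⁻¹ * G * Spr)) * X *
        (1 + (Sobs⁻¹ * G * Spr) * (Sobs⁻¹ * G * Spr)ᵀ) * Xᵀ).trace := by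
  rw [← transpose_mul_posteriorPrecision_mul Sobs hSpr, ← inv_mul_dataCovariance_mul hSobs]
  simp only [Matrix.mul_assoc, transpose_mul]
  rw [trace_mul_comm Sprᵀ]
  simp only [Matrix.mul_assoc]

end Whitening

lemma posteriorGain_eq_mul_rankOneSum_mul {𝕜 ι : Type*} [Field 𝕜] [LinearOrder 𝕜]
    [IsStrictOrderedRing 𝕜] [Fintype ι] [DecidableEq ι] {G : Matrix m n 𝕜} {Spr : Matrix n n 𝕜}
    {Sobs : Matrix m m 𝕜} (hSpr : IsUnit Spr.det)
    (hpos : IsUnit (posteriorPrecision G (Sobs * Sobsᵀ) (Spr * Sprᵀ)).det)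
    {δ : ι → 𝕜} {v : ι → m → 𝕜} {w : ι → n → 𝕜}
    (hv : ∀ i j, v i ⬝ᵥ v j = if i = j then 1 else 0)
    (hw : ∀ i j, w i ⬝ᵥ w j = if i = j then 1 else 0)
    (hsvd : Sobs⁻¹ * G * Spr = rankOneSum v w δ) :
    posteriorGain G (Sobs * Sobsᵀ) (Spr * Sprᵀ) =
      Spr * rankOneSum w v (fun i => δ i / (1 + δ i ^ 2)) * Sobs⁻¹ :=
  posteriorGain_eq_of_one_add_gram_mul_eq hSpr hpos <| by
    rw [hsvd, one_add_gram_mul_rankOneSum_div hv hw]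

end LinearGaussianModel

section BayesRisk

lemma isUnit_det_of_posDef_mul_transpose {n : Type*} [Fintype n] [DecidableEq n]
    {S : Matrix n n ℝ} (hS : (S * Sᵀ).PosDef) : IsUnit S.det :=
  isUnit_of_mul_isUnit_left <| by simpa only [det_mul] using hS.det_pos.ne'.isUnit

lemma posDef_posteriorPrecision {m n : Type*} [Fintype m] [DecidableEq m] [Fintype n]
    [DecidableEq n] (G : Matrix m n ℝ) {Γobs : Matrix m m ℝ} {Γpr : Matrix n n ℝ}
    (hobs : Γobs.PosDef) (hpr : Γpr.PosDef) : (posteriorPrecision G Γobs Γpr).PosDef := by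
  have hhessian := hobs.inv.posSemidef.conjTranspose_mul_mul_same G
  rw [conjTranspose_eq_transpose_of_trivial] at hhessian
  exact PosDef.posSemidef_add hhessian hpr.inv

section ErrorMoments

variable {k m n : Type*} [Fintype m] [Fintype n] {G : Matrix m n ℝ} {Γobs : Matrix m m ℝ}
  {Γpr : Matrix n n ℝ} {P : Measure ((n → ℝ) × (m → ℝ))}

lemma hasSecondMoment_mulVec_sub_mulVec (hP : HasLinearModelMoments G Γobs Γpr P)
    (B : Matrix k m ℝ) (C : Matrix k n ℝ) :
    HasSecondMoment (fun p => B *ᵥ p.2 - C *ᵥ p.1)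
      ((B * G - C) * Γpr * (B * G - C)ᵀ + B * Γobs * Bᵀ) P := by
  convert HasSecondMoment.mulVec hP (fromCols (B * G - C) B) using 1
  · ext1 p
    rw [fromCols_mulVec_sumElim, sub_mulVec, mulVec_sub, mulVec_mulVec]
    abel
  · simp [fromCols_mul_fromBlocks, transpose_fromCols, fromCols_mul_fromRows]

lemma hasSecondMoment_mulVec_snd (hP : HasLinearModelMoments G Γobs Γpr P) (B : Matrix k m ℝ) :
    HasSecondMoment (fun p => B *ᵥ p.2) (B * dataCovariance G Γobs Γpr * Bᵀ) P := by
  convert hasSecondMoment_mulVec_sub_mulVec hP B 0 using 1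
  · simp
  · simp [dataCovariance, Matrix.mul_add, Matrix.add_mul, Matrix.mul_assoc]

end ErrorMoments

variable {n m : ℕ} {G : Matrix (Fin m) (Fin n) ℝ} {Γobs : Matrix (Fin m) (Fin m) ℝ}
  {Γpr : Matrix (Fin n) (Fin n) ℝ} {P : Measure ((Fin n → ℝ) × (Fin m → ℝ))}

lemma bayesRisk_posteriorPrecision_eq (hobs : Γobs.PosDef) (hpr : Γpr.PosDef)
    (hP : HasLinearModelMoments G Γobs Γpr P) (B : Matrix (Fin n) (Fin m) ℝ) :
    bayesRisk P (posteriorPrecision G Γobs Γpr) B =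
      (posteriorPrecision G Γobs Γpr * ((B - posteriorGain G Γobs Γpr) *
        dataCovariance G Γobs Γpr * (B - posteriorGain G Γobs Γpr)ᵀ)).trace + n := by
  have hpos := (posDef_posteriorPrecision G hobs hpr).det_pos.ne'.isUnit
  have herror := hasSecondMoment_mulVec_sub_mulVec hP B 1
  simp only [one_mulVec] at herror
  rw [bayesRisk, herror.integral_dotProduct_mulVec,
    error_secondMoment_eq hobs.det_pos.ne'.isUnit hpr.det_pos.ne'.isUnit hpos
      (isHermitian_iff_isSymm.1 hobs.isHermitian) (isHermitian_iff_isSymm.1 hpr.isHermitian),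
    Matrix.mul_add, mul_nonsing_inv _ hpos, trace_add, trace_one, Fintype.card_fin]

lemma bayesRisk_posteriorGain (hobs : Γobs.PosDef) (hpr : Γpr.PosDef)
    (hP : HasLinearModelMoments G Γobs Γpr P) :
    bayesRisk P (posteriorPrecision G Γobs Γpr) (posteriorGain G Γobs Γpr) = n := by
  simp [bayesRisk_posteriorPrecision_eq hobs hpr hP]

lemma bayesRisk_eq_integral_add_bayesRisk_posteriorGain (hobs : Γobs.PosDef) (hpr : Γpr.PosDef)
    (hP : HasLinearModelMoments G Γobs Γpr P) (B : Matrix (Fin n) (Fin m) ℝ) :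
    bayesRisk P (posteriorPrecision G Γobs Γpr) B =
      (∫ p, (B *ᵥ p.2 - posteriorGain G Γobs Γpr *ᵥ p.2) ⬝ᵥ
        (posteriorPrecision G Γobs Γpr *ᵥ (B *ᵥ p.2 - posteriorGain G Γobs Γpr *ᵥ p.2)) ∂P) +
        bayesRisk P (posteriorPrecision G Γobs Γpr) (posteriorGain G Γobs Γpr) := by
  rw [bayesRisk_posteriorPrecision_eq hobs hpr hP, bayesRisk_posteriorGain hobs hpr hP,
    ← (hasSecondMoment_mulVec_snd hP _).integral_dotProduct_mulVec]
  simp only [sub_mulVec]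

theorem minimum_bayes_risk_low_rank_general {ι : Type*} [Fintype ι] [DecidableEq ι]
    (hobs : Γobs.PosDef) (hpr : Γpr.PosDef) (hP : HasLinearModelMoments G Γobs Γpr P)
    {Spr : Matrix (Fin n) (Fin n) ℝ} (hSpr : Γpr = Spr * Sprᵀ)
    {Sobs : Matrix (Fin m) (Fin m) ℝ} (hSobs : Γobs = Sobs * Sobsᵀ)
    {δ : ι → ℝ} {v : ι → Fin m → ℝ} {w : ι → Fin n → ℝ}
    (hv : ∀ i j, v i ⬝ᵥ v j = if i = j then 1 else 0)
    (hw : ∀ i j, w i ⬝ᵥ w j = if i = j then 1 else 0)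
    (hsvd : Sobs⁻¹ * G * Spr = rankOneSum v w δ) (s : Finset ι) {A : Matrix (Fin n) (Fin m) ℝ}
    (hA : A = ∑ i ∈ s,
      (δ i / (1 + δ i ^ 2)) • vecMulVec (Spr *ᵥ w i) ((Sobs⁻¹)ᵀ *ᵥ v i)) :
    bayesRisk P (posteriorPrecision G Γobs Γpr) A =
      (∫ p, (A *ᵥ p.2 - posteriorGain G Γobs Γpr *ᵥ p.2) ⬝ᵥ
        (posteriorPrecision G Γobs Γpr *ᵥ (A *ᵥ p.2 - posteriorGain G Γobs Γpr *ᵥ p.2)) ∂P) +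
        bayesRisk P (posteriorPrecision G Γobs Γpr) (posteriorGain G Γobs Γpr) ∧
    bayesRisk P (posteriorPrecision G Γobs Γpr) A = ∑ i ∈ sᶜ, δ i ^ 2 + n := by
  refine ⟨bayesRisk_eq_integral_add_bayesRisk_posteriorGain hobs hpr hP A, ?_⟩
  subst hSpr hSobs
  set f := fun i => δ i / (1 + δ i ^ 2)
  have hSpr := isUnit_det_of_posDef_mul_transpose hpr
  have hSobs := isUnit_det_of_posDef_mul_transpose hobs
  have hpos := (posDef_posteriorPrecision G hobs hpr).det_pos.ne'.isUnit
  have hdiff : A - posteriorGain G (Sobs * Sobsᵀ) (Spr * Sprᵀ) =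
      Spr * rankOneSum w v (fun i => if i ∈ s then 0 else -f i) * Sobs⁻¹ := by
    have hcoeff : (fun i => if i ∈ s then f i else 0) - f = fun i => if i ∈ s then 0 else -f i := by
      ext i
      by_cases hi : i ∈ s <;> simp [hi]
    rw [hA, posteriorGain_eq_mul_rankOneSum_mul hSpr hpos hv hw hsvd, ← rankOneSum_ite_mem,
      ← mul_rankOneSum_mul, ← Matrix.sub_mul, ← Matrix.mul_sub, ← rankOneSum_sub, hcoeff]
  have hmode (i : ι) : ((1 + δ i ^ 2) * if i ∈ s then 0 else -f i) ^ 2 =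
      if i ∈ sᶜ then δ i ^ 2 else 0 := by
    have : 1 + δ i ^ 2 ≠ 0 := by positivity
    by_cases hi : i ∈ s <;> simp [hi, f, mul_div_cancel₀ _ this]
  rw [bayesRisk_posteriorPrecision_eq hobs hpr hP, hdiff,
    trace_posteriorPrecision_mul_dataCovariance hSpr hSobs, hsvd,
    trace_one_add_gram_mul_rankOneSum _ _ hv hw]
  simp only [hmode, sum_ite_mem, univ_inter]

end BayesRisk

/-- Theorem 4.1 (ii): the minimum Bayes risk of the optimal rank-`r` approximation `A*`
satisfies `E‖A*y − x‖² = E‖A*y − μpos(y)‖² + E‖μpos(y) − x‖² = Σ_{i>r} δᵢ² + n`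
(all norms weighted by `Γpos⁻¹`). -/
theorem minimum_bayes_risk_low_rank
    (n m r : ℕ) (hn : 0 < n) (hm : 0 < m) (hr : r ≤ min m n)
    (G : Matrix (Fin m) (Fin n) ℝ)
    (Γobs : Matrix (Fin m) (Fin m) ℝ) (hobs : Γobs.PosDef)
    (Γpr : Matrix (Fin n) (Fin n) ℝ) (hpr : Γpr.PosDef)
    (Γpos : Matrix (Fin n) (Fin n) ℝ)
    (hΓpos : Γpos = (Gᵀ * Γobs⁻¹ * G + Γpr⁻¹)⁻¹)
    (Spr : Matrix (Fin n) (Fin n) ℝ) (hSpr : Γpr = Spr * Sprᵀ)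
    (Sobs : Matrix (Fin m) (Fin m) ℝ) (hSobs : Γobs = Sobs * Sobsᵀ)
    (δ : Fin (min m n) → ℝ)
    (v : Fin (min m n) → Fin m → ℝ) (w : Fin (min m n) → Fin n → ℝ)
    (hδ : ∀ i, 0 ≤ δ i)
    (hord : ∀ i j : Fin (min m n), i ≤ j → δ j ≤ δ i)
    (hv : ∀ i j, v i ⬝ᵥ v j = if i = j then (1:ℝ) else 0)
    (hw : ∀ i j, w i ⬝ᵥ w j = if i = j then (1:ℝ) else 0)
    (hsvd : Sobs⁻¹ * G * Spr =
      ∑ i : Fin (min m n), δ i • vecMulVec (v i) (w i))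
    (Astar : Matrix (Fin n) (Fin m) ℝ)
    (hAstar : Astar = ∑ i ∈ Finset.univ.filter (fun i : Fin (min m n) => (i : ℕ) < r),
      (δ i / (1 + (δ i) ^ 2)) • vecMulVec (Spr *ᵥ w i) ((Sobs⁻¹)ᵀ *ᵥ v i))
    (μpos : (Fin m → ℝ) → (Fin n → ℝ))
    (hμpos : ∀ y, μpos y = (Γpos * Gᵀ * Γobs⁻¹) *ᵥ y) :
    bayesRisk (jointMeasure G Γpr Γobs) Γpos⁻¹ Astar =
      (∫ p, (Astar *ᵥ p.2 - μpos p.2) ⬝ᵥ (Γpos⁻¹ *ᵥ (Astar *ᵥ p.2 - μpos p.2))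
          ∂(jointMeasure G Γpr Γobs)) +
        (∫ p, (μpos p.2 - p.1) ⬝ᵥ (Γpos⁻¹ *ᵥ (μpos p.2 - p.1))
          ∂(jointMeasure G Γpr Γobs)) ∧
    bayesRisk (jointMeasure G Γpr Γobs) Γpos⁻¹ Astar =
      (∑ i ∈ Finset.univ.filter (fun i : Fin (min m n) => r ≤ (i : ℕ)), (δ i) ^ 2) +
        (n : ℝ) := by
  subst hΓpos hAstar
  obtain rfl : μpos = _ := funext hμpos
  have hP : HasLinearModelMoments G Γobs Γpr (jointMeasure G Γpr Γobs) := by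
    subst hSpr hSobs
    exact hasLinearModelMoments_jointMeasure G (isUnit_det_of_posDef_mul_transpose hpr)
      (isUnit_det_of_posDef_mul_transpose hobs)
  have hprecision : (Gᵀ * Γobs⁻¹ * G + Γpr⁻¹)⁻¹⁻¹ = posteriorPrecision G Γobs Γpr :=
    nonsing_inv_nonsing_inv _ (posDef_posteriorPrecision G hobs hpr).det_pos.ne'.isUnit
  have hrisk := minimum_bayes_risk_low_rank_general hobs hpr hP hSpr hSobs hv hw hsvd
    (univ.filter fun i => (i : ℕ) < r) rfl
  simp only [compl_filter, not_lt] at hrisk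
  rw [hprecision]
  exact hrisk
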